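/- Spectral curve and commuting integrals for the dual cartesian system. Let x ≠ 0, H̃ = 4·p_x·p_y/x, J̃ = p_x² − 2x·p_x·p_y + 2y·p_y² + ((x² − 2y)/4)·H̃, and let L̃(λ) = [[p_x + (2λ − x)p_y, λ² − λx + (x² − 2y)/4], [−4p_y² + H̃, −(p_x + (2λ − x)p_y)]]. Then for every λ ∈ ℝ, −det L̃(λ) = H̃·λ² + J̃; moreover {H̃, J̃} = 0. -/

import Mathlib

/-- The canonical Poisson bracket of two functions of `(x, y, pₓ, p_y)` on `ℝ⁴`:
`{F,G} = ∂F/∂pₓ·∂G/∂x − ∂F/∂x·∂G/∂pₓ + ∂F/∂p_y·∂G/∂y − ∂F/∂y·∂G/∂p_y`. -/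
noncomputable def pb (F G : ℝ → ℝ → ℝ → ℝ → ℝ) (x y px py : ℝ) : ℝ :=
    deriv (fun s => F x y s py) px * deriv (fun s => G s y px py) x
  - deriv (fun s => F s y px py) x * deriv (fun s => G x y s py) px
  + deriv (fun s => F x y px s) py * deriv (fun s => G x s px py) y
  - deriv (fun s => F x s px py) y * deriv (fun s => G x y px s) py

/-- The dual Hamiltonian `H̃ = 4pₓp_y/x`. -/
noncomputable def Ham : ℝ → ℝ → ℝ → ℝ → ℝ := fun x _ px py => 4 * px * py / x

/-- The dual second integral `J̃ = pₓ² − 2x pₓ p_y + 2y p_y² + ((x² − 2y)/4)·H̃`. -/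
noncomputable def J : ℝ → ℝ → ℝ → ℝ → ℝ := fun x y px py =>
  px ^ 2 - 2 * x * px * py + 2 * y * py ^ 2 + ((x ^ 2 - 2 * y) / 4) * Ham x y px py

/-- The dual Lax matrix in cartesian coordinates. -/
noncomputable def L (lam x y px py : ℝ) : Matrix (Fin 2) (Fin 2) ℝ :=
  !![px + (2 * lam - x) * py, lam ^ 2 - lam * x + (x ^ 2 - 2 * y) / 4;
     -(4 * py ^ 2) + Ham x y px py, -(px + (2 * lam - x) * py)]

/-!
Before the change of time there is a one-parameter family of commuting pairs `F - E U`, `K + E V`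
with `F = 4pₓp_y`, `U = x`, `K = pₓ² − 2x pₓp_y + 2y p_y²` and `V = (x² − 2y)/4`. Comparing powers of
the parameter `E`, commutativity amounts to `{F,K} = 0`, `{F,V} = {U,K}` and `{U,V} = 0`. Solving
`F - E U = 0` for `E` gives `H̃ = F/U` and turns the second integral into `J̃ = K + V·H̃`; the three
relations and the Leibniz rule imply that these commute.

The Lax matrix is altered only in its lower left entry, by `H̃`. This adds `(λ² − λx + V)·H̃` to the
spectral polynomial `λF + K`, and the terms linear in `λ` cancel because `x·H̃ = F`.
-/

/-- Existence at a point of the four partial derivatives entering the Poisson bracket `pb`.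
Joint differentiability is not required. -/
structure PartiallyDifferentiableAt (F : ℝ → ℝ → ℝ → ℝ → ℝ) (x y px py : ℝ) : Prop where
  fst_pos : DifferentiableAt ℝ (fun s => F s y px py) x
  snd_pos : DifferentiableAt ℝ (fun s => F x s px py) y
  fst_mom : DifferentiableAt ℝ (fun s => F x y s py) px
  snd_mom : DifferentiableAt ℝ (fun s => F x y px s) py

section PoissonBracket

variable {F G K U V : ℝ → ℝ → ℝ → ℝ → ℝ} {x y px py : ℝ}

namespace PartiallyDifferentiableAt

theorem mul (hF : PartiallyDifferentiableAt F x y px py)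
    (hG : PartiallyDifferentiableAt G x y px py) :
    PartiallyDifferentiableAt (F * G) x y px py where
  fst_pos := hF.fst_pos.mul hG.fst_pos
  snd_pos := hF.snd_pos.mul hG.snd_pos
  fst_mom := hF.fst_mom.mul hG.fst_mom
  snd_mom := hF.snd_mom.mul hG.snd_mom

theorem div (hF : PartiallyDifferentiableAt F x y px py)
    (hG : PartiallyDifferentiableAt G x y px py) (hG₀ : G x y px py ≠ 0) :
    PartiallyDifferentiableAt (F / G) x y px py where
  fst_pos := hF.fst_pos.div hG.fst_pos hG₀
  snd_pos := hF.snd_pos.div hG.snd_pos hG₀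
  fst_mom := hF.fst_mom.div hG.fst_mom hG₀
  snd_mom := hF.snd_mom.div hG.snd_mom hG₀

end PartiallyDifferentiableAt

theorem pb_self (F : ℝ → ℝ → ℝ → ℝ → ℝ) (x y px py : ℝ) : pb F F x y px py = 0 := by
  unfold pb
  ring

theorem pb_add_right (F : ℝ → ℝ → ℝ → ℝ → ℝ) (hG : PartiallyDifferentiableAt G x y px py)
    (hK : PartiallyDifferentiableAt K x y px py) :
    pb F (G + K) x y px py = pb F G x y px py + pb F K x y px py := by
  simp only [pb, Pi.add_apply, deriv_fun_add hG.fst_pos hK.fst_pos,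
    deriv_fun_add hG.snd_pos hK.snd_pos, deriv_fun_add hG.fst_mom hK.fst_mom,
    deriv_fun_add hG.snd_mom hK.snd_mom]
  ring

theorem pb_mul_right (F : ℝ → ℝ → ℝ → ℝ → ℝ) (hG : PartiallyDifferentiableAt G x y px py)
    (hK : PartiallyDifferentiableAt K x y px py) :
    pb F (G * K) x y px py =
      pb F G x y px py * K x y px py + G x y px py * pb F K x y px py := by
  simp only [pb, Pi.mul_apply, deriv_fun_mul hG.fst_pos hK.fst_pos,
    deriv_fun_mul hG.snd_pos hK.snd_pos, deriv_fun_mul hG.fst_mom hK.fst_mom,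
    deriv_fun_mul hG.snd_mom hK.snd_mom]
  ring

theorem pb_div_left (G : ℝ → ℝ → ℝ → ℝ → ℝ) (hF : PartiallyDifferentiableAt F x y px py)
    (hU : PartiallyDifferentiableAt U x y px py) (hU₀ : U x y px py ≠ 0) :
    pb (F / U) G x y px py =
      (pb F G x y px py * U x y px py - F x y px py * pb U G x y px py) / U x y px py ^ 2 := by
  simp only [pb, Pi.div_apply, deriv_fun_div hF.fst_pos hU.fst_pos hU₀,
    deriv_fun_div hF.snd_pos hU.snd_pos hU₀, deriv_fun_div hF.fst_mom hU.fst_mom hU₀,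
    deriv_fun_div hF.snd_mom hU.snd_mom hU₀]
  ring

theorem pb_stackelTransform_eq_zero
    (hF : PartiallyDifferentiableAt F x y px py) (hU : PartiallyDifferentiableAt U x y px py)
    (hK : PartiallyDifferentiableAt K x y px py) (hV : PartiallyDifferentiableAt V x y px py)
    (hU₀ : U x y px py ≠ 0) (hFK : pb F K x y px py = 0)
    (hFV : pb F V x y px py = pb U K x y px py) (hUV : pb U V x y px py = 0) :
    pb (F / U) (K + V * (F / U)) x y px py = 0 := by
  have hFU : PartiallyDifferentiableAt (F / U) x y px py := hF.div hU hU₀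
  have leibniz : pb (F / U) (K + V * (F / U)) x y px py =
      pb (F / U) K x y px py + pb (F / U) V x y px py * (F x y px py / U x y px py) := by
    rw [pb_add_right _ hK (hV.mul hFU), pb_mul_right _ hV hFU, pb_self, mul_zero, add_zero]
    rfl
  rw [leibniz, pb_div_left K hF hU hU₀, pb_div_left V hF hU hU₀, hFK, hFV, hUV]
  field_simp
  ring

end PoissonBracket

/-- The Hamiltonian `H = 4pₓp_y` before the change of time. -/
def freeHam : ℝ → ℝ → ℝ → ℝ → ℝ := fun _ _ px py => 4 * px * py

/-- The quadratic integral of `freeHam`, which is the part of `J̃` free of `H̃`. -/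
def freeIntegral : ℝ → ℝ → ℝ → ℝ → ℝ := fun x y px py =>
  px ^ 2 - 2 * x * px * py + 2 * y * py ^ 2

/-- The factor `x` by which the change of time divides `freeHam`, as a function on phase space. -/
def timeFactor : ℝ → ℝ → ℝ → ℝ → ℝ := fun x _ _ _ => x

/-- The coefficient `(x² − 2y)/4` of `H̃` in `J̃`, as a function on phase space. -/
noncomputable def dualPotential : ℝ → ℝ → ℝ → ℝ → ℝ := fun x y _ _ => (x ^ 2 - 2 * y) / 4

theorem Ham_eq_freeHam_div_timeFactor : Ham = freeHam / timeFactor := rfl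

theorem J_eq_freeIntegral_add_dualPotential_mul_Ham : J = freeIntegral + dualPotential * Ham := rfl

section DualSystem

variable (lam x y px py : ℝ)

theorem neg_det_L :
    -(L lam x y px py).det =
      lam * freeHam x y px py + freeIntegral x y px py +
        (lam ^ 2 - lam * x + dualPotential x y px py) * Ham x y px py := by
  simp only [L, freeHam, freeIntegral, dualPotential, Matrix.det_fin_two_of]
  ring

theorem partiallyDifferentiableAt_freeHam : PartiallyDifferentiableAt freeHam x y px py := by
  constructor <;> unfold freeHam <;> fun_prop

theorem partiallyDifferentiableAt_freeIntegral :
    PartiallyDifferentiableAt freeIntegral x y px py := by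
  constructor <;> unfold freeIntegral <;> fun_prop

theorem partiallyDifferentiableAt_timeFactor : PartiallyDifferentiableAt timeFactor x y px py := by
  constructor <;> unfold timeFactor <;> fun_prop

theorem partiallyDifferentiableAt_dualPotential :
    PartiallyDifferentiableAt dualPotential x y px py := by
  constructor <;> unfold dualPotential <;> fun_prop

theorem pb_freeHam (G : ℝ → ℝ → ℝ → ℝ → ℝ) :
    pb freeHam G x y px py =
      4 * py * deriv (fun s => G s y px py) x + 4 * px * deriv (fun s => G x s px py) y := by
  simp [pb, freeHam]

theorem pb_timeFactor (G : ℝ → ℝ → ℝ → ℝ → ℝ) :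
    pb timeFactor G x y px py = -deriv (fun s => G x y s py) px := by
  simp [pb, timeFactor]

theorem deriv_fst_pos_freeIntegral :
    deriv (fun s => freeIntegral s y px py) x = -(2 * px * py) := by
  simp [freeIntegral]

theorem deriv_snd_pos_freeIntegral :
    deriv (fun s => freeIntegral x s px py) y = 2 * py ^ 2 := by
  simp [freeIntegral]

theorem deriv_fst_mom_freeIntegral :
    deriv (fun s => freeIntegral x y s py) px = 2 * px - 2 * x * py := by
  unfold freeIntegral
  rw [deriv_add_const, deriv_fun_sub (by fun_prop) (by fun_prop)]
  simp

theorem deriv_fst_pos_dualPotential :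
    deriv (fun s => dualPotential s y px py) x = x / 2 := by
  unfold dualPotential
  rw [deriv_div_const, deriv_sub_const, deriv_pow_field]
  ring

theorem deriv_snd_pos_dualPotential :
    deriv (fun s => dualPotential x s px py) y = -1 / 2 := by
  unfold dualPotential
  rw [deriv_div_const, deriv_const_sub, deriv_const_mul_field, deriv_id'']
  ring

theorem pb_freeHam_freeIntegral : pb freeHam freeIntegral x y px py = 0 := by
  rw [pb_freeHam, deriv_fst_pos_freeIntegral, deriv_snd_pos_freeIntegral]
  ring

theorem pb_freeHam_dualPotential :
    pb freeHam dualPotential x y px py = pb timeFactor freeIntegral x y px py := by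
  rw [pb_freeHam, pb_timeFactor, deriv_fst_pos_dualPotential, deriv_snd_pos_dualPotential,
    deriv_fst_mom_freeIntegral]
  ring

theorem pb_timeFactor_dualPotential : pb timeFactor dualPotential x y px py = 0 := by
  simp [pb_timeFactor, dualPotential]

end DualSystem

/-- Spectral curve and commuting integrals for the dual cartesian system:
`−det L̃(λ) = H̃λ² + J̃` for `x ≠ 0`, and `{H̃, J̃} = 0`. -/
theorem spectral_curve_dual_cartesian :
    (∀ lam x y px py : ℝ, x ≠ 0 →
      -(L lam x y px py).det = Ham x y px py * lam ^ 2 + J x y px py) ∧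
    (∀ x y px py : ℝ, x ≠ 0 → pb Ham J x y px py = 0) := by
  refine ⟨fun lam x y px py hx => ?_, fun x y px py hx => ?_⟩
  · have freeHam_eq : freeHam x y px py = x * Ham x y px py := (mul_div_cancel₀ _ hx).symm
    rw [neg_det_L, freeHam_eq, J_eq_freeIntegral_add_dualPotential_mul_Ham]
    simp only [Pi.add_apply, Pi.mul_apply]
    ring
  · rw [J_eq_freeIntegral_add_dualPotential_mul_Ham, Ham_eq_freeHam_div_timeFactor]
    exact pb_stackelTransform_eq_zero
      (partiallyDifferentiableAt_freeHam x y px py) (partiallyDifferentiableAt_timeFactor x y px py)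
      (partiallyDifferentiableAt_freeIntegral x y px py)
      (partiallyDifferentiableAt_dualPotential x y px py) hx
      (pb_freeHam_freeIntegral x y px py) (pb_freeHam_dualPotential x y px py)
      (pb_timeFactor_dualPotential x y px py)
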